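/- For every integer n ≥ 2, the unitary random walk kernel L on U(n) is √(1 − 1/C(n,2))-contracting in the L² Wasserstein metric for the intrinsic metric D: for all probability measures μ, ν on U(n), W_{D,2}(μL, νL) ≤ √(1 − 1/C(n,2)) · W_{D,2}(μ, ν). -/

import Mathlib

open MeasureTheory ENNReal Filter Topology Matrix

noncomputable section

/-- The (Borel) product measurable structure on matrices. -/
instance matrixMeasurableSpace {m n R : Type*} [MeasurableSpace R] :
    MeasurableSpace (Matrix m n R) :=
  (inferInstance : MeasurableSpace (m → n → R))

/-- `η` is a coupling of `μ` and `ν`: its two marginals are `μ` and `ν`. -/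
def IsCoupling {X : Type*} [MeasurableSpace X] (η : Measure (X × X)) (μ ν : Measure X) : Prop :=
  η.map Prod.fst = μ ∧ η.map Prod.snd = ν

/-- The `L^p` transportation cost (Wasserstein) distance associated with the distance
function `d`, with values in `ℝ≥0∞`:
`W_{d,p}(μ,ν) = inf { (∫ d(x,y)^p dη)^{1/p} : η a coupling of (μ,ν) }`. -/
def wassersteinE {X : Type*} [MeasurableSpace X] (d : X → X → ℝ≥0∞) (p : ℝ)
    (μ ν : Measure X) : ℝ≥0∞ :=
  ⨅ (η : Measure (X × X)) (_ : IsCoupling η μ ν), (∫⁻ z, d z.1 z.2 ^ p ∂η) ^ (1 / p)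

/-- The length of the curve `γ` over `[0,1]`, w.r.t. the distance function `d`:
the supremum, over all partitions `0 = t 0 ≤ t 1 ≤ ⋯ ≤ t k = 1` of `[0,1]`, of the sums of
the distances between consecutive points of the curve. -/
def pathLengthE {X : Type*} (d : X → X → ℝ≥0∞) (γ : ℝ → X) : ℝ≥0∞ :=
  ⨆ (k : ℕ) (t : Fin (k + 1) → ℝ) (_ : Monotone t) (_ : t 0 = 0) (_ : t (Fin.last k) = 1),
    ∑ i : Fin k, d (γ (t i.castSucc)) (γ (t i.succ))

/-- The intrinsic (length) distance on the set `S` induced by the distance function `d`: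
the infimum of `d`-lengths of continuous paths joining `a` to `b` inside `S`. -/
def intrinsicDistE {X : Type*} [TopologicalSpace X] (d : X → X → ℝ≥0∞) (S : Set X)
    (a b : X) : ℝ≥0∞ :=
  ⨅ (γ : ℝ → X) (_ : ContinuousOn γ (Set.Icc 0 1)) (_ : Set.MapsTo γ (Set.Icc 0 1) S)
    (_ : γ 0 = a) (_ : γ 1 = b), pathLengthE d γ

/-- `t` iterated steps of the Markov transition kernel `P`, started from the initial
distribution `μ` (so `kernelIterate P t μ = μP^t`). -/
def kernelIterate {X : Type*} [MeasurableSpace X] (P : X → Measure X) :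
    ℕ → Measure X → Measure X
  | 0, μ => μ
  | t + 1, μ => (kernelIterate P t μ).bind P

/-- A Haar probability measure for the multiplicative set `S`, viewed as a measure on the
ambient space: a probability measure carried by `S` that is invariant under left and right
translations by all elements of `S`. -/
def IsHaarLike {X : Type*} [MeasurableSpace X] [Mul X] (S : Set X) (μ : Measure X) : Prop :=
  IsProbabilityMeasure μ ∧ μ Sᶜ = 0 ∧
    ∀ a ∈ S, μ.map (fun x => a * x) = μ ∧ μ.map (fun x => x * a) = μ

/-- The Haar probability measure of a compact matrix group `S` (such as `SO(n)` or `U(n)`),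
viewed as a measure on the ambient matrix space.  For such `S` a translation-invariant
probability measure exists and is unique, so `haarLike S` is *the* Haar probability
measure of `S`. -/
def haarLike {X : Type*} [MeasurableSpace X] [Mul X] (S : Set X) : Measure X := by
  classical exact if h : ∃ μ, IsHaarLike S μ then h.choose else 0

/-- The set of pairs `1 ≤ i < j ≤ n` of indices. -/
def pairs (n : ℕ) : Finset (Fin n × Fin n) :=
  Finset.univ.filter fun p => p.1 < p.2

/-- The unitary group `U(n)`, as a subset of the `n × n` complex matrices. -/
def UU (n : ℕ) : Set (Matrix (Fin n) (Fin n) ℂ) := {a | a * aᴴ = 1}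

/-- The Hilbert–Schmidt distance `‖a - b‖_hs = √(Tr((a-b)*(a-b)))` between complex
matrices, as an `ℝ≥0∞`-valued distance function. -/
def hsDistC {n : ℕ} (a b : Matrix (Fin n) (Fin n) ℂ) : ℝ≥0∞ :=
  ENNReal.ofReal (Real.sqrt (Matrix.trace ((a - b)ᴴ * (a - b))).re)

/-- The intrinsic (length) metric `D` on `U(n)` induced by the Hilbert–Schmidt norm:
the infimum of `hs`-lengths of continuous paths inside `U(n)`. -/
def DU (n : ℕ) (a b : Matrix (Fin n) (Fin n) ℂ) : ℝ≥0∞ :=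
  intrinsicDistE hsDistC (UU n) a b

/-- The unitary matrix `u_{ij} ∈ U(n)` acting as `u ∈ U(2)` on `span{e_i, e_j}` (identifying
`e_i, e_j` with the standard basis of `ℂ²`) and as the identity on the orthogonal
complement. -/
def embed2 {n : ℕ} (i j : Fin n) (u : Matrix (Fin 2) (Fin 2) ℂ) :
    Matrix (Fin n) (Fin n) ℂ :=
  Matrix.of fun k l =>
    if k = i ∧ l = i then u 0 0
    else if k = i ∧ l = j then u 0 1
    else if k = j ∧ l = i then u 1 0
    else if k = j ∧ l = j then u 1 1
    else if k = l then 1 else 0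

/-- The transition kernel of the random walk on `U(n)`:
`L_x = (1/C(n,2)) ∑_{1≤i<j≤n} ∫_{U(2)} δ_{R_{ij}·x} dH₂(R)`, where `H₂` is the Haar
probability measure on `U(2)`. -/
def unitKernel (n : ℕ) (x : Matrix (Fin n) (Fin n) ℂ) : Measure (Matrix (Fin n) (Fin n) ℂ) :=
  (n.choose 2 : ℝ≥0∞)⁻¹ •
    ∑ p ∈ pairs n, (haarLike (UU 2)).map fun u => embed2 p.1 p.2 u * x

/-!
For a plane `p = (i, j)` let `d_p(x, y)` be the infimum of `D(x, u_{ij} y)` over `u ∈ U(2)`. Running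
the two walks with the same plane and the same Haar rotation, and composing the rotation of the
second walk with a nearly optimal `u` (which right invariance of Haar measure absorbs), reduces
the contraction to `∑_p d_p(x, y)² ≤ (C(n,2) - 1) D(x, y)²`.

By left invariance of `D` and Minkowski's inequality, `(∑_p d_p²)^{1/2}` satisfies the triangle
inequality, so on the length space `U(n)` this bound only has to hold to first order near the
diagonal. For `y = exp(h) x`, the path `t ↦ exp(-t h_p) exp(t h) x`, where `h_p` is the block of `h`
on the plane `p`, shows that `d_p(x, y) ≤ ‖h - h_p‖`; since every entry of `h` lies in at least one
block, `∑_p ‖h - h_p‖² ≤ (C(n,2) - 1) ‖h‖²`.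
-/

open scoped NNReal

section PathLength

variable {E : Type*} [PseudoEMetricSpace E] {S : Set E}

lemma pathLengthE_edist_le_eVariationOn (γ : ℝ → E) :
    pathLengthE edist γ ≤ eVariationOn γ (Set.Icc 0 1) := by
  simp only [pathLengthE, iSup_le_iff]
  intro k t ht h0 h1
  let u : ℕ → ℝ := fun i => t ⟨min i k, by omega⟩
  have hu : Monotone u := fun i j hij => ht (by simp only [Fin.mk_le_mk]; omega)
  have hu1 : ∀ i, u i ∈ Set.Icc (0 : ℝ) 1 := fun i =>
    ⟨h0 ▸ ht (Fin.zero_le _), h1 ▸ ht (Fin.le_last _)⟩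
  refine le_trans (le_of_eq ?_) (eVariationOn.sum_le (n := k) (f := γ) hu hu1)
  rw [Finset.sum_range]
  refine Finset.sum_congr rfl fun i _ => ?_
  rw [edist_comm]
  congr 3 <;> ext <;> simp only [Fin.val_succ, Fin.val_castSucc] <;> omega

lemma eVariationOn_le_pathLengthE_edist (γ : ℝ → E) :
    eVariationOn γ (Set.Icc 0 1) ≤ pathLengthE edist γ := by
  refine iSup_le fun ⟨m, u, hu, hu1⟩ => ?_
  -- `pathLengthE` asks for partitions with end points `0` and `1`, so both are adjoined to `u`.
  let v : ℕ → ℝ := fun i => if i = 0 then 0 else if i ≤ m + 1 then u (i - 1) else 1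
  have hv : Monotone v := by
    refine monotone_nat_of_le_succ fun i => ?_
    rcases eq_or_ne i 0 with rfl | hi
    · simpa [v] using (hu1 0).1
    rcases lt_trichotomy i (m + 1) with him | rfl | him
    · simpa [v, hi, him.le, Nat.succ_le_iff.2 him] using hu (Nat.sub_le i 1)
    · simpa [v] using (hu1 m).2
    · simp [v, hi, him.not_ge, show ¬ i ≤ m by omega]
  calc ∑ i ∈ Finset.range m, edist (γ (u (i + 1))) (γ (u i))
      = ∑ i ∈ Finset.range m, edist (γ (v (i + 1))) (γ (v (i + 2))) := by
        refine Finset.sum_congr rfl fun i hi => ?_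
        have him : i < m := Finset.mem_range.1 hi
        simp [v, him, him.le, edist_comm]
    _ ≤ ∑ i ∈ Finset.range (m + 2), edist (γ (v i)) (γ (v (i + 1))) := by
        rw [Finset.sum_range_succ, Finset.sum_range_succ']
        exact le_self_add.trans le_self_add
    _ = ∑ i : Fin (m + 2), edist (γ (v i.castSucc)) (γ (v i.succ)) := Finset.sum_range _
    _ ≤ pathLengthE edist γ :=
        le_iSup_of_le (m + 2) <| le_iSup_of_le (fun i : Fin (m + 3) => v i) <|
          le_iSup_of_le (fun i j hij => hv hij) <| le_iSup_of_le (by simp [v]) <|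
          le_iSup_of_le (by simp [v]) le_rfl

lemma pathLengthE_edist (γ : ℝ → E) :
    pathLengthE edist γ = eVariationOn γ (Set.Icc 0 1) :=
  (pathLengthE_edist_le_eVariationOn γ).antisymm (eVariationOn_le_pathLengthE_edist γ)

lemma intrinsicDistE_le_pathLengthE {X : Type*} [TopologicalSpace X] {d : X → X → ℝ≥0∞}
    {S : Set X} {γ : ℝ → X} (hγ : ContinuousOn γ (Set.Icc 0 1))
    (hS : Set.MapsTo γ (Set.Icc 0 1) S) :
    intrinsicDistE d S (γ 0) (γ 1) ≤ pathLengthE d γ :=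
  iInf_le_of_le γ <| iInf_le_of_le hγ <| iInf_le_of_le hS <| iInf_le_of_le rfl <|
    iInf_le_of_le rfl le_rfl

lemma intrinsicDistE_map_le {X Y : Type*} [TopologicalSpace X] [TopologicalSpace Y]
    {d : X → X → ℝ≥0∞} {d' : Y → Y → ℝ≥0∞} {S : Set X} {S' : Set Y} {φ : X → Y}
    (hφ : Continuous φ) (hS : Set.MapsTo φ S S') (hd : ∀ x y, d' (φ x) (φ y) ≤ d x y) (a b : X) :
    intrinsicDistE d' S' (φ a) (φ b) ≤ intrinsicDistE d S a b := by
  simp only [intrinsicDistE, le_iInf_iff]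
  rintro γ hγ hγS rfl rfl
  calc _ ≤ pathLengthE d' (φ ∘ γ) :=
        intrinsicDistE_le_pathLengthE (hφ.comp_continuousOn hγ) (hS.comp hγS)
    _ ≤ pathLengthE d γ := by unfold pathLengthE; gcongr; exact hd _ _

lemma intrinsicDistE_edist_le_eVariationOn {γ : ℝ → E} {s t : ℝ} (hst : s ≤ t)
    (hγ : ContinuousOn γ (Set.Icc s t)) (hS : Set.MapsTo γ (Set.Icc s t) S) :
    intrinsicDistE edist S (γ s) (γ t) ≤ eVariationOn γ (Set.Icc s t) := by
  let ℓ : ℝ → ℝ := fun r => s + r * (t - s)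
  have hℓ : Monotone ℓ := fun a b hab => by
    have := mul_le_mul_of_nonneg_right hab (sub_nonneg.2 hst)
    simpa [ℓ] using this
  have hℓ_mapsTo : Set.MapsTo ℓ (Set.Icc 0 1) (Set.Icc s t) := fun r hr => by
    simpa [ℓ] using And.intro (hℓ hr.1) (hℓ hr.2)
  have hle := intrinsicDistE_le_pathLengthE (d := edist) (γ := γ ∘ ℓ)
    (hγ.comp (by fun_prop) hℓ_mapsTo) (hS.comp hℓ_mapsTo)
  rw [pathLengthE_edist] at hle
  simpa [ℓ] using hle.trans (eVariationOn.comp_le_of_monotoneOn _ _ (hℓ.monotoneOn _) hℓ_mapsTo)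

lemma intrinsicDistE_edist_le_of_lipschitzOnWith {γ : ℝ → E} {K : ℝ≥0}
    (hγ : LipschitzOnWith K γ (Set.Icc 0 1)) (hS : Set.MapsTo γ (Set.Icc 0 1) S) :
    intrinsicDistE edist S (γ 0) (γ 1) ≤ K := by
  calc intrinsicDistE edist S (γ 0) (γ 1) ≤ eVariationOn (γ ∘ id) (Set.Icc 0 1) :=
        intrinsicDistE_edist_le_eVariationOn zero_le_one hγ.continuousOn hS
    _ ≤ K * eVariationOn id (Set.Icc 0 1) := hγ.comp_eVariationOn_le (Set.mapsTo_id _)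
    _ = K := by simp

lemma intrinsicDistE_edist_triangle (S : Set E) (a b c : E) :
    intrinsicDistE edist S a c ≤ intrinsicDistE edist S a b + intrinsicDistE edist S b c := by
  conv_rhs => simp only [intrinsicDistE, ENNReal.iInf_add, ENNReal.add_iInf]
  simp only [le_iInf_iff]
  rintro γ₂ h₂ m₂ h₂b rfl γ₁ h₁ m₁ rfl rfl
  let γ : ℝ → E := fun t => if t ≤ 1 then γ₁ t else γ₂ (t - 1)
  have hI : Set.Icc (0 : ℝ) 1 ∪ Set.Icc 1 2 = Set.Icc 0 2 :=
    Set.Icc_union_Icc_eq_Icc zero_le_one one_le_two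
  have e₁ : Set.EqOn γ γ₁ (Set.Icc 0 1) := fun t ht => if_pos ht.2
  have e₂ : Set.EqOn γ (γ₂ ∘ fun t => t - 1) (Set.Icc 1 2) := by
    rintro t ⟨ht, -⟩
    rcases ht.eq_or_lt with rfl | ht
    · simp [γ, h₂b]
    · exact if_neg ht.not_ge
  have hshift : Set.MapsTo (fun t : ℝ => t - 1) (Set.Icc 1 2) (Set.Icc 0 1) := by
    rintro t ⟨ht1, ht2⟩
    constructor <;> linarith
  have hγ : ContinuousOn γ (Set.Icc 0 2) := hI ▸ ContinuousOn.union_of_isClosed (h₁.congr e₁)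
    ((h₂.comp (by fun_prop) hshift).congr e₂) isClosed_Icc isClosed_Icc
  have hγS : Set.MapsTo γ (Set.Icc 0 2) S :=
    hI ▸ (m₁.congr e₁.symm).union ((m₂.comp hshift).congr e₂.symm)
  calc intrinsicDistE edist S (γ₁ 0) (γ₂ 1)
      = intrinsicDistE edist S (γ 0) (γ 2) := by norm_num [γ]
    _ ≤ eVariationOn γ (Set.Icc 0 2) := intrinsicDistE_edist_le_eVariationOn zero_le_two hγ hγS
    _ = eVariationOn γ (Set.Icc 0 1) + eVariationOn γ (Set.Icc 1 2) := by
        simpa using (eVariationOn.Icc_add_Icc γ (s := Set.univ) zero_le_one one_le_two trivial).symm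
    _ ≤ pathLengthE edist γ₁ + pathLengthE edist γ₂ := by
        rw [eVariationOn.congr e₁, eVariationOn.congr e₂, pathLengthE_edist, pathLengthE_edist]
        gcongr
        exact eVariationOn.comp_le_of_monotoneOn _ _ (fun _ _ _ _ h => by simpa using h) hshift

lemma le_sum_range_of_triangle {X : Type*} {S : Set X} {F : X → X → ℝ≥0∞}
    (hF_self : ∀ a ∈ S, F a a = 0)
    (hF : ∀ a ∈ S, ∀ b ∈ S, ∀ c ∈ S, F a c ≤ F a b + F b c) {x : ℕ → X} {k : ℕ}
    (hx : ∀ i ≤ k, x i ∈ S) : F (x 0) (x k) ≤ ∑ i ∈ Finset.range k, F (x i) (x (i + 1)) := by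
  induction k with
  | zero => simp [hF_self _ (hx 0 le_rfl)]
  | succ k ih =>
    rw [Finset.sum_range_succ]
    calc F (x 0) (x (k + 1)) ≤ F (x 0) (x k) + F (x k) (x (k + 1)) :=
          hF _ (hx 0 (by omega)) _ (hx k (by omega)) _ (hx (k + 1) le_rfl)
      _ ≤ _ := by gcongr; exact ih fun i hi => hx i (by omega)

lemma exists_forall_edist_div_lt {γ : ℝ → E} (hγ : ContinuousOn γ (Set.Icc 0 1)) {δ : ℝ≥0∞}
    (hδ : 0 < δ) :
    ∃ N : ℕ, N ≠ 0 ∧ ∀ i < N, edist (γ (i / N)) (γ ((i + 1 : ℕ) / N)) < δ := by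
  obtain ⟨η, hη, hγη⟩ := EMetric.uniformContinuousOn_iff.1
    (isCompact_Icc.uniformContinuousOn_of_continuous hγ) δ hδ
  obtain ⟨N, hN⟩ := ENNReal.exists_inv_nat_lt hη.ne'
  have hN0 : N ≠ 0 := by
    rintro rfl
    simp at hN
  have hNpos : (0 : ℝ) < N := by positivity
  have hmem : ∀ i ≤ N, (i / N : ℝ) ∈ Set.Icc 0 1 := fun i hi =>
    unitInterval.div_mem i.cast_nonneg N.cast_nonneg (Nat.cast_le.2 hi)
  refine ⟨N, hN0, fun i hi => hγη (hmem i hi.le) (hmem (i + 1) hi) ?_⟩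
  have hmesh : (i / N : ℝ) - (i + 1 : ℕ) / N = -(N : ℝ)⁻¹ := by push_cast; field_simp; ring
  rwa [edist_dist, Real.dist_eq, hmesh, abs_neg, abs_inv, abs_of_pos hNpos,
    ENNReal.ofReal_inv_of_pos hNpos, ENNReal.ofReal_natCast]

lemma sum_range_div_le_pathLengthE {X : Type*} (d : X → X → ℝ≥0∞) (γ : ℝ → X) {N : ℕ}
    (hN : N ≠ 0) :
    ∑ i ∈ Finset.range N, d (γ (i / N)) (γ ((i + 1 : ℕ) / N)) ≤ pathLengthE d γ := by
  have hmono : Monotone fun i : Fin (N + 1) => (i : ℝ) / N := fun i j hij => by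
    dsimp only
    gcongr
    exact hij
  rw [Finset.sum_range]
  exact le_iSup_of_le N <| le_iSup_of_le (fun i : Fin (N + 1) => (i : ℝ) / N) <|
    le_iSup_of_le hmono <| le_iSup_of_le (by simp) <| le_iSup_of_le (by simp [hN]) le_rfl

lemma le_mul_pathLengthE_of_edist_lt {F : E → E → ℝ≥0∞}
    (hF : ∀ a ∈ S, ∀ b ∈ S, ∀ c ∈ S, F a c ≤ F a b + F b c) {K δ : ℝ≥0∞} (hδ : 0 < δ)
    (hloc : ∀ a ∈ S, ∀ b ∈ S, edist a b < δ → F a b ≤ K * edist a b) {γ : ℝ → E}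
    (hγ : ContinuousOn γ (Set.Icc 0 1)) (hS : Set.MapsTo γ (Set.Icc 0 1) S) :
    F (γ 0) (γ 1) ≤ K * pathLengthE edist γ := by
  have hF_self : ∀ a ∈ S, F a a = 0 := fun a ha => by
    simpa using hloc a ha a ha (by simpa using hδ)
  obtain ⟨N, hN, hstep⟩ := exists_forall_edist_div_lt hγ hδ
  let x : ℕ → E := fun i => γ (i / N)
  have hx : ∀ i ≤ N, x i ∈ S := fun i hi =>
    hS (unitInterval.div_mem i.cast_nonneg N.cast_nonneg (Nat.cast_le.2 hi))
  calc F (γ 0) (γ 1) = F (x 0) (x N) := by simp [x, hN]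
    _ ≤ ∑ i ∈ Finset.range N, F (x i) (x (i + 1)) := le_sum_range_of_triangle hF_self hF hx
    _ ≤ ∑ i ∈ Finset.range N, K * edist (x i) (x (i + 1)) := by
        refine Finset.sum_le_sum fun i hi => ?_
        have hi : i < N := Finset.mem_range.1 hi
        exact hloc _ (hx i hi.le) _ (hx (i + 1) hi) (hstep i hi)
    _ ≤ K * pathLengthE edist γ := by
        rw [← Finset.mul_sum]
        gcongr
        exact sum_range_div_le_pathLengthE edist γ hN

lemma le_mul_intrinsicDistE_of_local {F : E → E → ℝ≥0∞}
    (hF : ∀ a ∈ S, ∀ b ∈ S, ∀ c ∈ S, F a c ≤ F a b + F b c) {K : ℝ≥0∞} (hK : K ≠ ∞)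
    (hloc : ∀ K' > K, ∃ δ > 0, ∀ a ∈ S, ∀ b ∈ S, edist a b < δ → F a b ≤ K' * edist a b)
    {a b : E} (hab : intrinsicDistE edist S a b ≠ ∞) :
    F a b ≤ K * intrinsicDistE edist S a b := by
  refine ENNReal.le_mul_of_forall_lt (Or.inr hab) (Or.inl hK) fun K' hK' L hL => ?_
  simp only [intrinsicDistE, gt_iff_lt, iInf_lt_iff] at hL
  obtain ⟨γ, hγ, hγS, rfl, rfl, hL⟩ := hL
  obtain ⟨δ, hδ, hδ_loc⟩ := hloc K' hK'
  exact (le_mul_pathLengthE_of_edist_lt hF hδ hδ_loc hγ hγS).trans (by gcongr)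

end PathLength

section Exponential

lemma exists_forall_norm_exp_sub_exp_sub_le {A : Type*} [NormedRing A] [NormedAlgebra ℝ A]
    [CompleteSpace A] {c : ℝ} (hc : 0 < c) :
    ∃ r > 0, ∀ a b : A, ‖a‖ < r → ‖b‖ < r →
      ‖NormedSpace.exp a - NormedSpace.exp b - (a - b)‖ ≤ c * ‖a - b‖ := by
  have hexp : HasStrictFDerivAt (NormedSpace.exp : A → A) (1 : A →L[ℝ] A) 0 :=
    hasStrictFDerivAt_exp_zero
  obtain ⟨r, hr, hball⟩ := Metric.eventually_nhds_iff.1 (hexp.isLittleO.def hc)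
  exact ⟨r, hr, fun a b ha hb => @hball (a, b) (by simpa [Prod.dist_eq] using ⟨ha, hb⟩)⟩

lemma eventually_exists_norm_lt_exp_eq {A : Type*} [NormedRing A] [NormedAlgebra ℝ A]
    [CompleteSpace A] {r : ℝ} (hr : 0 < r) :
    ∀ᶠ u in 𝓝 (1 : A), ∃ h : A, ‖h‖ < r ∧ NormedSpace.exp h = u := by
  have hexp : HasStrictFDerivAt (NormedSpace.exp : A → A)
      ((ContinuousLinearEquiv.refl ℝ A : A ≃L[ℝ] A) : A →L[ℝ] A) 0 := hasStrictFDerivAt_exp_zero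
  have hmap := hexp.map_nhds_eq_of_equiv
  rw [NormedSpace.exp_zero] at hmap
  rw [← hmap, eventually_map]
  filter_upwards [Metric.ball_mem_nhds (0 : A) hr] with h hh
  exact ⟨h, by simpa using hh, rfl⟩

lemma eventually_exists_skewAdjoint_exp_eq {A : Type*} [NormedRing A] [NormedAlgebra ℝ A]
    [CompleteSpace A] [StarRing A] [NormedStarGroup A] {ε : ℝ} (hε : 0 < ε) :
    ∀ᶠ u in 𝓝 (1 : A), u ∈ unitary A →
      ∃ h ∈ skewAdjoint A, NormedSpace.exp h = u ∧ ‖h‖ ≤ (1 + ε) * ‖u - 1‖ := by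
  let _ : NormedAlgebra ℚ A := .restrictScalars ℚ ℝ A
  have hc : ε / (1 + ε) < 1 := (div_lt_one (by positivity)).2 (by linarith)
  obtain ⟨r, hr, hlin⟩ :=
    exists_forall_norm_exp_sub_exp_sub_le (A := A) (c := ε / (1 + ε)) (by positivity)
  filter_upwards [eventually_exists_norm_lt_exp_eq hr]
  rintro _ ⟨h, hhr, rfl⟩ hu
  refine ⟨h, ?_, rfl, ?_⟩
  · -- `star h` and `-h` have the same exponential, which is injective on the ball of radius `r`.
    have hexp_star : NormedSpace.exp (star h) = NormedSpace.exp (-h) := by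
      have hneg : NormedSpace.exp (-h) * NormedSpace.exp h = 1 := by
        rw [← NormedSpace.exp_add_of_commute (Commute.refl h).neg_left, neg_add_cancel,
          NormedSpace.exp_zero]
      rw [← NormedSpace.star_exp]
      exact (left_inv_eq_right_inv hneg (Unitary.mem_iff.1 hu).2).symm
    have hle := hlin (star h) (-h) (by rwa [norm_star]) (by rwa [norm_neg])
    rw [hexp_star, sub_self, zero_sub, norm_neg] at hle
    have hzero : ‖star h - -h‖ = 0 := by nlinarith [norm_nonneg (star h - -h)]
    exact skewAdjoint.mem_iff.2 (sub_eq_zero.1 (norm_eq_zero.1 hzero))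
  · have hle := hlin h 0 hhr (by simpa using hr)
    rw [NormedSpace.exp_zero, sub_zero] at hle
    have htri : ‖h‖ ≤ ‖NormedSpace.exp h - 1‖ + ‖NormedSpace.exp h - 1 - h‖ := by
      simpa using norm_sub_le (NormedSpace.exp h - 1) (NormedSpace.exp h - 1 - h)
    calc ‖h‖ = (1 + ε) * ((1 - ε / (1 + ε)) * ‖h‖) := by field_simp; ring
      _ ≤ (1 + ε) * ‖NormedSpace.exp h - 1‖ := by gcongr; linarith

lemma exists_skewAdjoint_exp_eq_of_finite_spectrum {A : Type*} [CStarAlgebra A] {u : A}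
    (hu : u ∈ unitary A) (hspec : (spectrum ℂ u).Finite) :
    ∃ h ∈ skewAdjoint A, NormedSpace.exp h = u := by
  have hnormal : IsStarNormal u := isStarNormal_of_mem_unitary hu
  have hlog : ContinuousOn Complex.log (spectrum ℂ u) := hspec.continuousOn _
  refine ⟨cfc Complex.log u, skewAdjoint.mem_iff.2 ?_, ?_⟩
  · rw [← cfc_star, ← cfc_neg]
    refine cfc_congr fun z hz => ?_
    have hz : ‖z‖ = 1 := spectrum.norm_eq_one_of_unitary hu hz
    apply Complex.ext <;> simp [Complex.log_re, hz]
  · rw [← CFC.complex_exp_eq_normedSpace_exp, ← cfc_comp' Complex.exp Complex.log u]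
    conv_rhs => rw [← cfc_id' ℂ u]
    refine cfc_congr fun z hz => Complex.exp_log ?_
    rw [← norm_ne_zero_iff, spectrum.norm_eq_one_of_unitary hu hz]
    exact one_ne_zero

open scoped Matrix.Norms.L2Operator in
lemma exists_skewAdjoint_exp_eq {ι : Type*} [Fintype ι] [DecidableEq ι] {u : Matrix ι ι ℂ}
    (hu : u ∈ unitaryGroup ι ℂ) : ∃ h ∈ skewAdjoint (Matrix ι ι ℂ), NormedSpace.exp h = u :=
  exists_skewAdjoint_exp_eq_of_finite_spectrum hu u.finite_spectrum

open scoped Matrix.Norms.Frobenius in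
lemma exp_mul_eq_mul_exp_of_mul_eq_mul {m n 𝕜 : Type*} [Fintype m] [DecidableEq m] [Fintype n]
    [DecidableEq n] [RCLike 𝕜] {a : Matrix m m 𝕜} {b : Matrix m n 𝕜} {c : Matrix n n 𝕜}
    (h : a * b = b * c) : NormedSpace.exp a * b = b * NormedSpace.exp c := by
  have hpow : ∀ k, a ^ k * b = b * c ^ k := fun k => by
    induction k with
    | zero => simp
    | succ k ih => rw [pow_succ', pow_succ, Matrix.mul_assoc, ih, ← Matrix.mul_assoc, h,
        Matrix.mul_assoc, ← pow_succ', pow_succ]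
  have ha := (NormedSpace.exp_series_hasSum_exp' (𝕂 := 𝕜) a).map (addMonoidHomMulRight b)
    (continuous_id.matrix_mul continuous_const)
  have hc := (NormedSpace.exp_series_hasSum_exp' (𝕂 := 𝕜) c).map (addMonoidHomMulLeft b)
    (continuous_const.matrix_mul continuous_id)
  have hterm : (addMonoidHomMulRight b ∘ fun k => ((k.factorial : 𝕜)⁻¹ • a ^ k)) =
      addMonoidHomMulLeft b ∘ fun k => ((k.factorial : 𝕜)⁻¹ • c ^ k) := by
    funext k
    simp [addMonoidHomMulRight, addMonoidHomMulLeft, hpow]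
  exact ha.unique (hterm ▸ hc)

end Exponential

open scoped Matrix.Norms.Frobenius

section Unitary

variable {n : ℕ}

lemma frobenius_norm_eq_sqrt_trace {m n : Type*} [Fintype m] [Fintype n] (a : Matrix m n ℂ) :
    ‖a‖ = Real.sqrt (trace (aᴴ * a)).re := by
  rw [frobenius_norm_def, Real.sqrt_eq_rpow, Finset.sum_comm]
  congr 1
  simp only [trace, diag_apply, mul_apply, conjTranspose_apply, Complex.re_sum]
  refine Finset.sum_congr rfl fun i _ => Finset.sum_congr rfl fun j _ => ?_
  rw [Real.rpow_two, ← Complex.normSq_eq_norm_sq, Complex.star_def,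
    ← Complex.normSq_eq_conj_mul_self, Complex.ofReal_re]

lemma DU_eq_intrinsicDistE_edist : DU n = intrinsicDistE edist (UU n) := by
  have hsDistC_eq_edist : hsDistC (n := n) = edist := by
    funext a b
    rw [hsDistC, ← frobenius_norm_eq_sqrt_trace, edist_dist, dist_eq_norm]
  funext a b
  rw [DU, hsDistC_eq_edist]

namespace UU

lemma mem_iff_mem_unitaryGroup {u : Matrix (Fin n) (Fin n) ℂ} :
    u ∈ UU n ↔ u ∈ unitaryGroup (Fin n) ℂ :=
  mem_unitaryGroup_iff.symm

lemma one_mem : (1 : Matrix (Fin n) (Fin n) ℂ) ∈ UU n :=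
  mem_iff_mem_unitaryGroup.2 (Submonoid.one_mem _)

variable {u v : Matrix (Fin n) (Fin n) ℂ}

lemma mul_mem (hu : u ∈ UU n) (hv : v ∈ UU n) : u * v ∈ UU n :=
  mem_iff_mem_unitaryGroup.2 <|
    Submonoid.mul_mem _ (mem_iff_mem_unitaryGroup.1 hu) (mem_iff_mem_unitaryGroup.1 hv)

lemma star_mem (hu : u ∈ UU n) : star u ∈ UU n :=
  mem_iff_mem_unitaryGroup.2 (Unitary.star_mem (mem_iff_mem_unitaryGroup.1 hu))

lemma mul_star_self (hu : u ∈ UU n) : u * star u = 1 := hu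

lemma star_mul_self (hu : u ∈ UU n) : star u * u = 1 := mul_eq_one_comm.1 hu

lemma exp_mem {h : Matrix (Fin n) (Fin n) ℂ} (hh : h ∈ skewAdjoint (Matrix (Fin n) (Fin n) ℂ)) :
    NormedSpace.exp h ∈ UU n :=
  mem_iff_mem_unitaryGroup.2 (NormedSpace.exp_mem_unitary_of_mem_skewAdjoint hh)

lemma norm_mul_left (hu : u ∈ UU n) (a : Matrix (Fin n) (Fin n) ℂ) : ‖u * a‖ = ‖a‖ := by
  rw [frobenius_norm_eq_sqrt_trace, frobenius_norm_eq_sqrt_trace, conjTranspose_mul,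
    Matrix.mul_assoc, ← Matrix.mul_assoc uᴴ, ← star_eq_conjTranspose u, star_mul_self hu,
    Matrix.one_mul]

lemma norm_mul_right (hu : u ∈ UU n) (a : Matrix (Fin n) (Fin n) ℂ) : ‖a * u‖ = ‖a‖ := by
  rw [← norm_star, star_mul, norm_mul_left (star_mem hu), norm_star]

lemma edist_mul_left (hu : u ∈ UU n) (a b : Matrix (Fin n) (Fin n) ℂ) :
    edist (u * a) (u * b) = edist a b := by
  rw [edist_eq_enorm_sub, edist_eq_enorm_sub, ← Matrix.mul_sub, ← ofReal_norm, norm_mul_left hu,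
    ofReal_norm]

lemma edist_mul_right (hu : u ∈ UU n) (a b : Matrix (Fin n) (Fin n) ℂ) :
    edist (a * u) (b * u) = edist a b := by
  rw [edist_eq_enorm_sub, edist_eq_enorm_sub, ← Matrix.sub_mul, ← ofReal_norm, norm_mul_right hu,
    ofReal_norm]

end UU

lemma isCompact_UU : IsCompact (UU n) := by
  have : ProperSpace (Matrix (Fin n) (Fin n) ℂ) := FiniteDimensional.proper_rclike ℂ _
  refine Metric.isCompact_of_isClosed_isBounded (isClosed_eq (by fun_prop) continuous_const)
    (isBounded_iff_forall_norm_le.2 ⟨‖(1 : Matrix (Fin n) (Fin n) ℂ)‖, fun u hu => ?_⟩)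
  simpa using (UU.norm_mul_left hu 1).le

lemma DU_triangle (a b c : Matrix (Fin n) (Fin n) ℂ) : DU n a c ≤ DU n a b + DU n b c := by
  rw [DU_eq_intrinsicDistE_edist]
  exact intrinsicDistE_edist_triangle _ _ _ _

lemma DU_mul_left_le {u : Matrix (Fin n) (Fin n) ℂ} (hu : u ∈ UU n)
    (a b : Matrix (Fin n) (Fin n) ℂ) : DU n (u * a) (u * b) ≤ DU n a b := by
  rw [DU_eq_intrinsicDistE_edist]
  exact intrinsicDistE_map_le (continuous_const_mul u) (fun _ hv => UU.mul_mem hu hv)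
    (fun x y => (UU.edist_mul_left hu x y).le) a b

lemma hasDerivAt_exp_smul_mul_exp_smul_mul {A : Type*} [NormedRing A] [NormedAlgebra ℝ A]
    [CompleteSpace A] (x h g : A) (t : ℝ) :
    HasDerivAt (fun t : ℝ => NormedSpace.exp (t • x) * (NormedSpace.exp (t • h) * g))
      (NormedSpace.exp (t • x) * ((x + h) * (NormedSpace.exp (t • h) * g))) t := by
  have hderiv := (hasDerivAt_exp_smul_const x t).mul
    ((hasDerivAt_exp_smul_const' h t).mul_const g)
  convert! hderiv using 1
  noncomm_ring

lemma DU_exp_mul_exp_mul_le {x h g : Matrix (Fin n) (Fin n) ℂ}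
    (hx : x ∈ skewAdjoint (Matrix (Fin n) (Fin n) ℂ))
    (hh : h ∈ skewAdjoint (Matrix (Fin n) (Fin n) ℂ)) (hg : g ∈ UU n) :
    DU n g (NormedSpace.exp x * (NormedSpace.exp h * g)) ≤ ‖x + h‖ₑ := by
  let γ : ℝ → Matrix (Fin n) (Fin n) ℂ := fun t =>
    NormedSpace.exp (t • x) * (NormedSpace.exp (t • h) * g)
  have hleft : ∀ t : ℝ, NormedSpace.exp (t • x) ∈ UU n := fun t =>
    UU.exp_mem (skewAdjoint.smul_mem t hx)
  have hright : ∀ t : ℝ, NormedSpace.exp (t • h) * g ∈ UU n := fun t =>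
    UU.mul_mem (UU.exp_mem (skewAdjoint.smul_mem t hh)) hg
  have hderiv (t : ℝ) : HasDerivAt γ
      (NormedSpace.exp (t • x) * ((x + h) * (NormedSpace.exp (t • h) * g))) t :=
    hasDerivAt_exp_smul_mul_exp_smul_mul x h g t
  have hspeed : LipschitzWith ‖x + h‖₊ γ := by
    refine lipschitzWith_of_nnnorm_deriv_le (fun t => (hderiv t).differentiableAt) fun t => ?_
    rw [(hderiv t).deriv, ← NNReal.coe_le_coe, coe_nnnorm, coe_nnnorm, UU.norm_mul_left (hleft t),
      UU.norm_mul_right (hright t)]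
  have hle := intrinsicDistE_edist_le_of_lipschitzOnWith hspeed.lipschitzOnWith
    (fun t _ => UU.mul_mem (hleft t) (hright t) : Set.MapsTo γ (Set.Icc 0 1) (UU n))
  simp only [γ, zero_smul, one_smul, NormedSpace.exp_zero, one_mul] at hle
  rw [DU_eq_intrinsicDistE_edist]
  exact hle

lemma DU_exp_mul_le {h g : Matrix (Fin n) (Fin n) ℂ}
    (hh : h ∈ skewAdjoint (Matrix (Fin n) (Fin n) ℂ)) (hg : g ∈ UU n) :
    DU n g (NormedSpace.exp h * g) ≤ ‖h‖ₑ := by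
  simpa [NormedSpace.exp_zero] using DU_exp_mul_exp_mul_le (zero_mem _) hh hg

lemma DU_ne_top {a b : Matrix (Fin n) (Fin n) ℂ} (ha : a ∈ UU n) (hb : b ∈ UU n) :
    DU n a b ≠ ∞ := by
  obtain ⟨h, hh, hexp⟩ := exists_skewAdjoint_exp_eq
    (UU.mem_iff_mem_unitaryGroup.1 (UU.mul_mem hb (UU.star_mem ha)))
  have hle := DU_exp_mul_le hh ha
  rw [hexp, Matrix.mul_assoc, UU.star_mul_self ha, Matrix.mul_one] at hle
  exact ne_top_of_le_ne_top enorm_ne_top hle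

lemma exists_exp_mul_eq_of_edist_lt {c : ℝ≥0∞} (hc : 1 < c) :
    ∃ δ > 0, ∀ a ∈ UU n, ∀ b ∈ UU n, edist a b < δ →
      ∃ h ∈ skewAdjoint (Matrix (Fin n) (Fin n) ℂ),
        NormedSpace.exp h * a = b ∧ ‖h‖ₑ ≤ c * edist a b := by
  obtain ⟨ε, hε, hεc⟩ := ENNReal.lt_iff_exists_add_pos_lt.1 hc
  obtain ⟨δ, hδ, hlog⟩ := EMetric.mem_nhds_iff.1
    (eventually_exists_skewAdjoint_exp_eq (A := Matrix (Fin n) (Fin n) ℂ) (ε := ε) hε)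
  refine ⟨δ, hδ, fun a ha b hb hab => ?_⟩
  have hdist : edist (b * star a) 1 = edist a b := by
    rw [← UU.mul_star_self ha, UU.edist_mul_right (UU.star_mem ha), edist_comm]
  obtain ⟨h, hh, (hexp : NormedSpace.exp h = b * star a), hle⟩ :=
    hlog (show edist (b * star a) 1 < δ from hdist ▸ hab)
      (UU.mem_iff_mem_unitaryGroup.1 (UU.mul_mem hb (UU.star_mem ha)))
  refine ⟨h, hh, by rw [hexp, Matrix.mul_assoc, UU.star_mul_self ha, Matrix.mul_one], ?_⟩
  calc ‖h‖ₑ = ENNReal.ofReal ‖h‖ := (ofReal_norm h).symm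
    _ ≤ ENNReal.ofReal ((1 + ε) * ‖b * star a - 1‖) := ENNReal.ofReal_le_ofReal hle
    _ = (1 + ε) * edist a b := by
        rw [ENNReal.ofReal_mul (by positivity), ofReal_norm, ← edist_eq_enorm_sub, hdist,
          ENNReal.ofReal_add zero_le_one ε.coe_nonneg, ENNReal.ofReal_one,
          ENNReal.ofReal_coe_nnreal]
    _ ≤ c * edist a b := by gcongr

end Unitary

section Embedding

variable {n : ℕ} {i j : Fin n}

/-- The matrix of the linear map `ℂ² → ℂⁿ` that sends the standard basis to `e_i, e_j`; for
`i ≠ j` it is an isometry, through which `embed2 i j` and `block2 i j` are expressed. -/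
def planeInclusion (i j : Fin n) : Matrix (Fin n) (Fin 2) ℂ :=
  (1 : Matrix (Fin n) (Fin n) ℂ).submatrix id ![i, j]

lemma conjTranspose_planeInclusion_mul_self (hij : i ≠ j) :
    (planeInclusion i j)ᴴ * planeInclusion i j = 1 := by
  have hinj : Function.Injective ![i, j] := by
    simp [Function.Injective, Fin.forall_fin_two, hij, hij.symm]
  ext a b
  simp only [planeInclusion, mul_apply, conjTranspose_apply, submatrix_apply, id, one_apply,
    apply_ite (star : ℂ → ℂ), star_one, star_zero]
  simp [hinj.eq_iff, eq_comm]

lemma conjTranspose_planeInclusion_mul_cancel (hij : i ≠ j) {m : Type*}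
    (x : Matrix (Fin 2) m ℂ) : (planeInclusion i j)ᴴ * (planeInclusion i j * x) = x := by
  rw [← Matrix.mul_assoc, conjTranspose_planeInclusion_mul_self hij, Matrix.one_mul]

lemma embed2_eq (hij : i ≠ j) (u : Matrix (Fin 2) (Fin 2) ℂ) :
    embed2 i j u = planeInclusion i j * u * (planeInclusion i j)ᴴ +
      (1 - planeInclusion i j * (planeInclusion i j)ᴴ) := by
  ext k l
  simp only [embed2, planeInclusion, of_apply, Matrix.add_apply, Matrix.sub_apply, mul_apply,
    Fin.sum_univ_two, conjTranspose_apply, submatrix_apply, one_apply, id, cons_val_zero,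
    cons_val_one]
  by_cases hki : k = i <;> by_cases hkj : k = j <;> by_cases hli : l = i <;>
    by_cases hlj : l = j <;> simp_all [eq_comm]

lemma embed2_one (hij : i ≠ j) : embed2 i j 1 = 1 := by
  rw [embed2_eq hij, Matrix.mul_one, add_sub_cancel]

lemma embed2_mul (hij : i ≠ j) (u v : Matrix (Fin 2) (Fin 2) ℂ) :
    embed2 i j (u * v) = embed2 i j u * embed2 i j v := by
  simp only [embed2_eq hij, Matrix.mul_add, Matrix.add_mul, Matrix.mul_sub, Matrix.sub_mul,
    Matrix.mul_assoc, conjTranspose_planeInclusion_mul_cancel hij, Matrix.mul_one, Matrix.one_mul]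
  abel

lemma embed2_conjTranspose (hij : i ≠ j) (u : Matrix (Fin 2) (Fin 2) ℂ) :
    embed2 i j uᴴ = (embed2 i j u)ᴴ := by
  simp [embed2_eq hij, Matrix.mul_assoc]

lemma embed2_mem_UU (hij : i ≠ j) {u : Matrix (Fin 2) (Fin 2) ℂ} (hu : u ∈ UU 2) :
    embed2 i j u ∈ UU n := by
  change _ * _ = _
  rw [← embed2_conjTranspose hij, ← embed2_mul hij, show u * uᴴ = 1 from hu, embed2_one hij]

lemma continuous_embed2 (hij : i ≠ j) :
    Continuous (embed2 i j : Matrix (Fin 2) (Fin 2) ℂ → Matrix (Fin n) (Fin n) ℂ) := by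
  simp only [funext (embed2_eq hij)]
  fun_prop

lemma embed2_exp (hij : i ≠ j) (x : Matrix (Fin 2) (Fin 2) ℂ) :
    embed2 i j (NormedSpace.exp x) =
      NormedSpace.exp (planeInclusion i j * x * (planeInclusion i j)ᴴ) := by
  set ι := planeInclusion i j
  have honto : NormedSpace.exp (ι * x * ιᴴ) * ι = ι * NormedSpace.exp x :=
    exp_mul_eq_mul_exp_of_mul_eq_mul <| by
      rw [Matrix.mul_assoc, conjTranspose_planeInclusion_mul_self hij, Matrix.mul_one]
  have hcompl : NormedSpace.exp (ι * x * ιᴴ) * (1 - ι * ιᴴ) = 1 - ι * ιᴴ := by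
    simpa [NormedSpace.exp_zero] using
      exp_mul_eq_mul_exp_of_mul_eq_mul (a := ι * x * ιᴴ) (b := 1 - ι * ιᴴ) (c := 0) <| by
        simp [Matrix.mul_sub, Matrix.mul_assoc, ι, conjTranspose_planeInclusion_mul_cancel hij]
  calc embed2 i j (NormedSpace.exp x)
      = ι * NormedSpace.exp x * ιᴴ + (1 - ι * ιᴴ) := embed2_eq hij _
    _ = NormedSpace.exp (ι * x * ιᴴ) * (ι * ιᴴ + (1 - ι * ιᴴ)) := by
        rw [Matrix.mul_add, hcompl, ← Matrix.mul_assoc, honto]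
    _ = NormedSpace.exp (ι * x * ιᴴ) := by rw [add_sub_cancel, Matrix.mul_one]

/-- The compression of `h` to the coordinate plane of `e_i, e_j`: the entries whose row and column
both lie in `{i, j}` are kept, the others are replaced by `0`. -/
def block2 (i j : Fin n) (h : Matrix (Fin n) (Fin n) ℂ) : Matrix (Fin n) (Fin n) ℂ :=
  planeInclusion i j * ((planeInclusion i j)ᴴ * h * planeInclusion i j) * (planeInclusion i j)ᴴ

lemma block2_apply (hij : i ≠ j) (h : Matrix (Fin n) (Fin n) ℂ) (k l : Fin n) :
    block2 i j h k l = if (k = i ∨ k = j) ∧ (l = i ∨ l = j) then h k l else 0 := by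
  have hcompress : (planeInclusion i j)ᴴ * h * planeInclusion i j
      = h.submatrix ![i, j] ![i, j] := by
    ext a b
    simp only [planeInclusion, mul_apply, conjTranspose_apply, submatrix_apply, id, one_apply,
      apply_ite (star : ℂ → ℂ), star_one, star_zero]
    simp
  rw [block2, hcompress]
  simp only [planeInclusion, mul_apply, conjTranspose_apply, submatrix_apply, id, one_apply,
    apply_ite (star : ℂ → ℂ), star_one, star_zero, Fin.sum_univ_two, cons_val_zero, cons_val_one]
  by_cases hki : k = i <;> by_cases hkj : k = j <;> by_cases hli : l = i <;>
    by_cases hlj : l = j <;> simp_all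

lemma block2_mem_skewAdjoint (i j : Fin n) {h : Matrix (Fin n) (Fin n) ℂ}
    (hh : h ∈ skewAdjoint (Matrix (Fin n) (Fin n) ℂ)) :
    block2 i j h ∈ skewAdjoint (Matrix (Fin n) (Fin n) ℂ) := by
  have hstar : hᴴ = -h := hh
  rw [skewAdjoint.mem_iff]
  simp [star_eq_conjTranspose, block2, hstar, Matrix.mul_assoc]

lemma exists_embed2_eq_exp_neg_block2 (hij : i ≠ j) {h : Matrix (Fin n) (Fin n) ℂ}
    (hh : h ∈ skewAdjoint (Matrix (Fin n) (Fin n) ℂ)) :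
    ∃ u ∈ UU 2, embed2 i j u = NormedSpace.exp (-block2 i j h) := by
  have hstar : hᴴ = -h := hh
  have hskew : -((planeInclusion i j)ᴴ * h * planeInclusion i j) ∈
      skewAdjoint (Matrix (Fin 2) (Fin 2) ℂ) := by
    rw [skewAdjoint.mem_iff]
    simp [star_eq_conjTranspose, hstar, Matrix.mul_assoc]
  refine ⟨_, UU.exp_mem hskew, ?_⟩
  rw [embed2_exp hij, Matrix.mul_neg, Matrix.neg_mul, block2]

lemma card_pairs (n : ℕ) : (pairs n).card = n.choose 2 := by
  rw [pairs, Fintype.card_product_filter_lt, Fintype.card_fin]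

lemma ne_of_mem_pairs {p : Fin n × Fin n} (hp : p ∈ pairs n) : p.1 ≠ p.2 :=
  (Finset.mem_filter.1 hp).2.ne

lemma exists_mem_pairs (hn : 2 ≤ n) (k l : Fin n) :
    ∃ p ∈ pairs n, (k = p.1 ∨ k = p.2) ∧ (l = p.1 ∨ l = p.2) := by
  have hne : ∀ {k l : Fin n}, k ≠ l →
      ∃ p ∈ pairs n, (k = p.1 ∨ k = p.2) ∧ (l = p.1 ∨ l = p.2) := by
    intro k l hkl
    rcases hkl.lt_or_gt with hlt | hgt
    · exact ⟨(k, l), by simpa [pairs] using hlt, by simp⟩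
    · exact ⟨(l, k), by simpa [pairs] using hgt, by simp⟩
  rcases eq_or_ne k l with rfl | hkl
  · have : Nontrivial (Fin n) := Fin.nontrivial_iff_two_le.2 hn
    obtain ⟨m, hm⟩ := exists_ne k
    obtain ⟨p, hp, hk, -⟩ := hne hm.symm
    exact ⟨p, hp, hk, hk⟩
  · exact hne hkl

lemma sum_norm_sub_block2_sq_le (hn : 2 ≤ n) (h : Matrix (Fin n) (Fin n) ℂ) :
    ∑ p ∈ pairs n, ‖h - block2 p.1 p.2 h‖ ^ 2 ≤ ((n.choose 2 - 1 : ℕ) : ℝ) * ‖h‖ ^ 2 := by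
  have hnorm_sq (a : Matrix (Fin n) (Fin n) ℂ) : ‖a‖ ^ 2 = ∑ k, ∑ l, ‖a k l‖ ^ 2 := by
    rw [frobenius_norm_def, ← Real.sqrt_eq_rpow, Real.sq_sqrt (by positivity)]
    simp only [Real.rpow_two]
  have hentry (k l : Fin n) :
      ∑ p ∈ pairs n, ‖(h - block2 p.1 p.2 h) k l‖ ^ 2 ≤
        ((n.choose 2 - 1 : ℕ) : ℝ) * ‖h k l‖ ^ 2 := by
    obtain ⟨p₀, hp₀, hkl⟩ := exists_mem_pairs hn k l
    have hzero : ‖(h - block2 p₀.1 p₀.2 h) k l‖ ^ 2 = 0 := by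
      rw [Matrix.sub_apply, block2_apply (ne_of_mem_pairs hp₀), if_pos hkl, sub_self, norm_zero,
        zero_pow two_ne_zero]
    rw [← Finset.add_sum_erase _ _ hp₀, hzero, zero_add, ← card_pairs,
      ← Finset.card_erase_of_mem hp₀, ← nsmul_eq_mul]
    refine Finset.sum_le_card_nsmul _ _ _ fun p hp => ?_
    rw [Matrix.sub_apply, block2_apply (ne_of_mem_pairs (Finset.mem_of_mem_erase hp))]
    split_ifs <;> simp
  simp only [hnorm_sq, Finset.mul_sum]
  rw [Finset.sum_comm]
  refine Finset.sum_le_sum fun k _ => ?_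
  rw [Finset.sum_comm]
  exact Finset.sum_le_sum fun l _ => hentry k l

lemma rpow_sum_enorm_sub_block2_le (hn : 2 ≤ n) (h : Matrix (Fin n) (Fin n) ℂ) :
    (∑ p ∈ pairs n, ‖h - block2 p.1 p.2 h‖ₑ ^ (2 : ℝ)) ^ (1 / 2 : ℝ) ≤
      ((n.choose 2 - 1 : ℕ) : ℝ≥0∞) ^ (1 / 2 : ℝ) * ‖h‖ₑ := by
  have henorm (a : Matrix (Fin n) (Fin n) ℂ) : ‖a‖ₑ ^ (2 : ℝ) = ENNReal.ofReal (‖a‖ ^ 2) := by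
    rw [← ofReal_norm, ENNReal.rpow_two, ENNReal.ofReal_pow (norm_nonneg a)]
  have hsum : ∑ p ∈ pairs n, ‖h - block2 p.1 p.2 h‖ₑ ^ (2 : ℝ) ≤
      ((n.choose 2 - 1 : ℕ) : ℝ≥0∞) * ‖h‖ₑ ^ (2 : ℝ) := by
    simp only [henorm]
    rw [← ENNReal.ofReal_sum_of_nonneg (fun p _ => by positivity), ← ENNReal.ofReal_natCast,
      ← ENNReal.ofReal_mul (by positivity)]
    exact ENNReal.ofReal_le_ofReal (sum_norm_sub_block2_sq_le hn h)
  refine (ENNReal.rpow_le_rpow hsum (by norm_num)).trans_eq ?_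
  rw [ENNReal.mul_rpow_of_nonneg _ _ (by norm_num), ← ENNReal.rpow_mul,
    mul_one_div_cancel two_ne_zero, ENNReal.rpow_one]

end Embedding

section PlaneDistance

variable {n : ℕ} {i j : Fin n}

/-- The distance from `x` to the orbit of `y` under the unitary rotations of the coordinate plane
of `e_i, e_j`, for the intrinsic metric of `U(n)`. It is the distance that remains after one step
of the walk in that plane, when the rotations of the two walkers are coupled optimally. -/
def planeDist (i j : Fin n) (x y : Matrix (Fin n) (Fin n) ℂ) : ℝ≥0∞ :=
  ⨅ u : UU 2, DU n x (embed2 i j u * y)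

lemma planeDist_triangle (hij : i ≠ j) (a b c : Matrix (Fin n) (Fin n) ℂ) :
    planeDist i j a c ≤ planeDist i j a b + planeDist i j b c := by
  simp only [planeDist, ENNReal.iInf_add, ENNReal.add_iInf]
  refine le_iInf fun v => le_iInf fun u => iInf_le_of_le ⟨u * v, UU.mul_mem u.2 v.2⟩ ?_
  calc DU n a (embed2 i j (u * v) * c)
      ≤ DU n a (embed2 i j u * b) + DU n (embed2 i j u * b) (embed2 i j (u * v) * c) :=
        DU_triangle _ _ _
    _ ≤ DU n a (embed2 i j u * b) + DU n b (embed2 i j v * c) := by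
        rw [embed2_mul hij, Matrix.mul_assoc]
        gcongr
        exact DU_mul_left_le (embed2_mem_UU hij u.2) _ _

lemma planeDist_exp_mul_le (hij : i ≠ j) {h g : Matrix (Fin n) (Fin n) ℂ}
    (hh : h ∈ skewAdjoint (Matrix (Fin n) (Fin n) ℂ)) (hg : g ∈ UU n) :
    planeDist i j g (NormedSpace.exp h * g) ≤ ‖h - block2 i j h‖ₑ := by
  obtain ⟨u, hu, hexp⟩ := exists_embed2_eq_exp_neg_block2 hij hh
  calc planeDist i j g (NormedSpace.exp h * g)
      ≤ DU n g (embed2 i j u * (NormedSpace.exp h * g)) := iInf_le_of_le ⟨u, hu⟩ le_rfl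
    _ ≤ ‖-block2 i j h + h‖ₑ :=
        hexp ▸ DU_exp_mul_exp_mul_le (neg_mem (block2_mem_skewAdjoint i j hh)) hh hg
    _ = ‖h - block2 i j h‖ₑ := by rw [neg_add_eq_sub]

lemma rpow_sum_planeDist_triangle (a b c : Matrix (Fin n) (Fin n) ℂ) :
    (∑ p ∈ pairs n, planeDist p.1 p.2 a c ^ (2 : ℝ)) ^ (1 / 2 : ℝ) ≤
      (∑ p ∈ pairs n, planeDist p.1 p.2 a b ^ (2 : ℝ)) ^ (1 / 2 : ℝ) +
        (∑ p ∈ pairs n, planeDist p.1 p.2 b c ^ (2 : ℝ)) ^ (1 / 2 : ℝ) := by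
  refine le_trans ?_ (ENNReal.Lp_add_le _ _ _ one_le_two)
  gcongr with p hp
  exact planeDist_triangle (ne_of_mem_pairs hp) a b c

lemma exists_rpow_sum_planeDist_le_of_edist_lt (hn : 2 ≤ n) {c : ℝ≥0∞} (hc : 1 < c) :
    ∃ δ > 0, ∀ a ∈ UU n, ∀ b ∈ UU n, edist a b < δ →
      (∑ p ∈ pairs n, planeDist p.1 p.2 a b ^ (2 : ℝ)) ^ (1 / 2 : ℝ) ≤
        ((n.choose 2 - 1 : ℕ) : ℝ≥0∞) ^ (1 / 2 : ℝ) * (c * edist a b) := by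
  obtain ⟨δ, hδ, hlog⟩ := exists_exp_mul_eq_of_edist_lt (n := n) hc
  refine ⟨δ, hδ, fun a ha b hb hab => ?_⟩
  obtain ⟨h, hh, rfl, hle⟩ := hlog a ha b hb hab
  calc (∑ p ∈ pairs n, planeDist p.1 p.2 a (NormedSpace.exp h * a) ^ (2 : ℝ)) ^ (1 / 2 : ℝ)
      ≤ (∑ p ∈ pairs n, ‖h - block2 p.1 p.2 h‖ₑ ^ (2 : ℝ)) ^ (1 / 2 : ℝ) := by
        gcongr with p hp
        exact planeDist_exp_mul_le (ne_of_mem_pairs hp) hh ha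
    _ ≤ ((n.choose 2 - 1 : ℕ) : ℝ≥0∞) ^ (1 / 2 : ℝ) * ‖h‖ₑ := rpow_sum_enorm_sub_block2_le hn h
    _ ≤ _ := by gcongr

lemma sum_planeDist_sq_le (hn : 2 ≤ n) {a b : Matrix (Fin n) (Fin n) ℂ} (ha : a ∈ UU n)
    (hb : b ∈ UU n) :
    ∑ p ∈ pairs n, planeDist p.1 p.2 a b ^ (2 : ℝ) ≤
      ((n.choose 2 - 1 : ℕ) : ℝ≥0∞) * DU n a b ^ (2 : ℝ) := by
  set K : ℝ≥0∞ := ((n.choose 2 - 1 : ℕ) : ℝ≥0∞) ^ (1 / 2 : ℝ) with hK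
  have hK_top : K ≠ ∞ := ENNReal.rpow_ne_top_of_nonneg (by norm_num) (ENNReal.natCast_ne_top _)
  have hlocal : ∀ K' > K, ∃ δ > 0, ∀ x ∈ UU n, ∀ y ∈ UU n, edist x y < δ →
      (∑ p ∈ pairs n, planeDist p.1 p.2 x y ^ (2 : ℝ)) ^ (1 / 2 : ℝ) ≤ K' * edist x y := by
    intro K' hKK'
    have hlim : Tendsto (fun c : ℝ≥0∞ => K * c) (𝓝[>] 1) (𝓝 (K * 1)) :=
      ((ENNReal.continuous_const_mul hK_top).tendsto 1).mono_left nhdsWithin_le_nhds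
    obtain ⟨c, hcK', hc⟩ := ((hlim.eventually_lt_const (by rwa [mul_one])).and
      (self_mem_nhdsWithin (s := Set.Ioi 1))).exists
    obtain ⟨δ, hδ, hle⟩ := exists_rpow_sum_planeDist_le_of_edist_lt hn hc
    refine ⟨δ, hδ, fun x hx y hy hxy => (hle x hx y hy hxy).trans ?_⟩
    rw [← mul_assoc]
    gcongr
  have hglobal : (∑ p ∈ pairs n, planeDist p.1 p.2 a b ^ (2 : ℝ)) ^ (1 / 2 : ℝ) ≤
      K * DU n a b := by
    have hDU := DU_ne_top ha hb
    rw [DU_eq_intrinsicDistE_edist] at hDU ⊢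
    exact le_mul_intrinsicDistE_of_local
      (fun x _ y _ z _ => rpow_sum_planeDist_triangle x y z) hK_top hlocal hDU
  calc ∑ p ∈ pairs n, planeDist p.1 p.2 a b ^ (2 : ℝ)
      = ((∑ p ∈ pairs n, planeDist p.1 p.2 a b ^ (2 : ℝ)) ^ (1 / 2 : ℝ)) ^ (2 : ℝ) := by
        rw [← ENNReal.rpow_mul, one_div_mul_cancel two_ne_zero, ENNReal.rpow_one]
    _ ≤ (K * DU n a b) ^ (2 : ℝ) := by gcongr
    _ = ((n.choose 2 - 1 : ℕ) : ℝ≥0∞) * DU n a b ^ (2 : ℝ) := by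
        rw [ENNReal.mul_rpow_of_nonneg _ _ zero_le_two, hK, ← ENNReal.rpow_mul,
          one_div_mul_cancel two_ne_zero, ENNReal.rpow_one]

end PlaneDistance

section Selection

instance {m n R : Type*} [Countable m] [Countable n] [TopologicalSpace R]
    [SecondCountableTopology R] : SecondCountableTopology (Matrix m n R) :=
  inferInstanceAs (SecondCountableTopology (m → n → R))

instance {m n R : Type*} [Countable m] [Countable n] [TopologicalSpace R]
    [SecondCountableTopology R] [MeasurableSpace R] [BorelSpace R] : BorelSpace (Matrix m n R) :=
  inferInstanceAs (BorelSpace (m → n → R))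

lemma continuous_uncurry_of_triangle {X : Type*} [TopologicalSpace X] {d : X → X → ℝ≥0∞}
    (htriangle : ∀ a b c, d a c ≤ d a b + d b c) (hleft : ∀ a, Tendsto (d a) (𝓝 a) (𝓝 0))
    (hright : ∀ a, Tendsto (fun x => d x a) (𝓝 a) (𝓝 0)) :
    Continuous fun z : X × X => d z.1 z.2 := by
  have hquad (a b x y : X) : d a b ≤ d a x + d x y + d y b :=
    (htriangle a y b).trans (by gcongr; exact htriangle a x y)
  have hpinch (a b : X) (c : ℝ≥0∞) :
      Tendsto (fun z : X × X => d a z.1 + c + d z.2 b) (𝓝 (a, b)) (𝓝 c) ∧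
        Tendsto (fun z : X × X => d z.1 a + c + d b z.2) (𝓝 (a, b)) (𝓝 c) := by
    have hfst : Tendsto Prod.fst (𝓝 (a, b)) (𝓝 a) := continuous_fst.tendsto (a, b)
    have hsnd : Tendsto Prod.snd (𝓝 (a, b)) (𝓝 b) := continuous_snd.tendsto (a, b)
    constructor
    · simpa using (((hleft a).comp hfst).add_const c).add ((hright b).comp hsnd)
    · simpa using (((hright a).comp hfst).add_const c).add ((hleft b).comp hsnd)
  refine continuous_iff_continuousAt.2 fun ⟨a, b⟩ =>
    tendsto_order.2 ⟨fun c hc => ?_, fun c hc => ?_⟩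
  · filter_upwards [(hpinch a b c).1.eventually_lt_const hc] with ⟨x, y⟩ hxy
    by_contra! hle
    exact (hquad a b x y).not_gt <| lt_of_le_of_lt (by gcongr) hxy
  · filter_upwards [(hpinch a b (d a b)).2.eventually_lt_const hc] with ⟨x, y⟩ hxy
    exact (hquad x y a b).trans_lt hxy

lemma exists_measurable_le_iInf_add {Z T : Type*} [MeasurableSpace Z] [TopologicalSpace T]
    [TopologicalSpace.SeparableSpace T] [MeasurableSpace T] [Nonempty T] {f : Z → T → ℝ≥0∞}
    (hmeas : ∀ t, Measurable fun z => f z t) (hcont : ∀ z, Continuous (f z)) {ε : ℝ≥0∞}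
    (hε : ε ≠ 0) : ∃ σ : Z → T, Measurable σ ∧ ∀ z, f z (σ z) ≤ (⨅ t, f z t) + ε := by
  classical
  let s := TopologicalSpace.denseSeq T
  have hdense (z : Z) : ⨅ t, f z t = ⨅ m, f z (s m) := by
    refine le_antisymm (le_iInf fun m => iInf_le _ _) <| le_iInf fun t => le_of_forall_gt ?_
    intro c hc
    obtain ⟨m, hm⟩ := (TopologicalSpace.denseRange_denseSeq T).exists_mem_open
      (isOpen_lt (hcont z) continuous_const) ⟨t, hc⟩
    exact (iInf_le _ m).trans_lt hm
  have hexists (z : Z) : ∃ m, f z (s m) ≤ (⨅ m, f z (s m)) + ε := by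
    rcases eq_or_ne (⨅ m, f z (s m)) ∞ with htop | hfinite
    · exact ⟨0, by simp [htop]⟩
    · obtain ⟨m, hm⟩ := iInf_lt_iff.1 (ENNReal.lt_add_right hfinite hε)
      exact ⟨m, hm.le⟩
  have hfind : Measurable fun z => Nat.find (hexists z) :=
    measurable_find hexists fun m =>
      measurableSet_le (hmeas _) ((Measurable.iInf fun m => hmeas _).add_const ε)
  refine ⟨fun z => s (Nat.find (hexists z)), measurable_from_nat.comp hfind, fun z => ?_⟩
  rw [hdense z]
  exact Nat.find_spec (hexists z)

variable {n : ℕ} {i j : Fin n}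

lemma exists_DU_le_two_mul_edist :
    ∃ δ > 0, ∀ a ∈ UU n, ∀ b ∈ UU n, edist a b < δ → DU n a b ≤ 2 * edist a b := by
  obtain ⟨δ, hδ, hlog⟩ := exists_exp_mul_eq_of_edist_lt (n := n) one_lt_two
  refine ⟨δ, hδ, fun a ha b hb hab => ?_⟩
  obtain ⟨h, hh, rfl, hle⟩ := hlog a ha b hb hab
  exact (DU_exp_mul_le hh ha).trans hle

lemma continuous_DU : Continuous fun z : UU n × UU n => DU n z.1 z.2 := by
  obtain ⟨δ, hδ, hle⟩ := exists_DU_le_two_mul_edist (n := n)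
  have hlim (a : UU n) : Tendsto (fun x : UU n => 2 * edist a x) (𝓝 a) (𝓝 0) := by
    have : Continuous fun x : UU n => 2 * edist a x :=
      (ENNReal.continuous_const_mul ENNReal.ofNat_ne_top).comp
        (continuous_const.edist continuous_id)
    simpa using this.tendsto a
  have hnear (a : UU n) : ∀ᶠ x in 𝓝 a, edist x a < δ := Metric.eball_mem_nhds a hδ
  refine continuous_uncurry_of_triangle (d := fun a b : UU n => DU n a b)
    (fun a b c => DU_triangle _ _ _) (fun a => ?_) fun a => ?_
  · refine tendsto_of_tendsto_of_tendsto_of_le_of_le' tendsto_const_nhds (hlim a)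
      (Eventually.of_forall fun _ => zero_le) ?_
    filter_upwards [hnear a] with x hx
    exact hle a a.2 x x.2 (edist_comm x a ▸ hx)
  · refine tendsto_of_tendsto_of_tendsto_of_le_of_le' tendsto_const_nhds (hlim a)
      (Eventually.of_forall fun _ => zero_le) ?_
    filter_upwards [hnear a] with x hx
    exact edist_comm x a ▸ hle x x.2 a a.2 hx

lemma continuous_DU_embed2_mul (hij : i ≠ j) :
    Continuous fun w : (UU n × UU n) × UU 2 => DU n w.1.1 (embed2 i j w.2 * w.1.2) := by
  have hrotate : Continuous fun w : (UU n × UU n) × UU 2 =>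
      embed2 i j (w.2 : Matrix (Fin 2) (Fin 2) ℂ) * w.1.2.1 :=
    ((continuous_embed2 hij).comp (by fun_prop)).matrix_mul (by fun_prop)
  have hpair : Continuous fun w : (UU n × UU n) × UU 2 =>
      (w.1.1, (⟨embed2 i j w.2 * w.1.2, UU.mul_mem (embed2_mem_UU hij w.2.2) w.1.2.2⟩ : UU n)) :=
    (continuous_fst.comp continuous_fst).prodMk (hrotate.subtype_mk _)
  simpa only [Function.comp_def] using continuous_DU.comp hpair

lemma iInf_DU_sq (i j : Fin n) (x y : Matrix (Fin n) (Fin n) ℂ) :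
    ⨅ u : UU 2, DU n x (embed2 i j u * y) ^ (2 : ℝ) = planeDist i j x y ^ (2 : ℝ) :=
  ((ENNReal.orderIsoRpow 2 two_pos).map_iInf _).symm

lemma exists_measurable_DU_sq_le_planeDist_sq_add (hij : i ≠ j) {ε : ℝ≥0∞} (hε : ε ≠ 0) :
    ∃ σ : Matrix (Fin n) (Fin n) ℂ × Matrix (Fin n) (Fin n) ℂ → UU 2, Measurable σ ∧
      ∀ x ∈ UU n, ∀ y ∈ UU n,
        DU n x (embed2 i j (σ (x, y)) * y) ^ (2 : ℝ) ≤ planeDist i j x y ^ (2 : ℝ) + ε := by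
  have hcost : Continuous fun w : (UU n × UU n) × UU 2 =>
      DU n w.1.1 (embed2 i j w.2 * w.1.2) ^ (2 : ℝ) :=
    ENNReal.continuous_rpow_const.comp (continuous_DU_embed2_mul hij)
  have hmeas (u : UU 2) : Measurable fun z : UU n × UU n =>
      DU n z.1 (embed2 i j u * z.2) ^ (2 : ℝ) := by
    have := (hcost.comp (Continuous.prodMk_left u)).measurable
    simpa only [Function.comp_def] using this
  have hcont (z : UU n × UU n) : Continuous fun u : UU 2 =>
      DU n z.1 (embed2 i j u * z.2) ^ (2 : ℝ) := by
    simpa only [Function.comp_def] using hcost.comp (Continuous.prodMk_right z)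
  have : Nonempty (UU 2) := ⟨1, UU.one_mem⟩
  obtain ⟨τ, hτ, hle⟩ := exists_measurable_le_iInf_add hmeas hcont hε
  have hemb : MeasurableEmbedding (Prod.map Subtype.val Subtype.val :
      UU n × UU n → Matrix (Fin n) (Fin n) ℂ × Matrix (Fin n) (Fin n) ℂ) :=
    (isCompact_UU.isClosed.isClosedEmbedding_subtypeVal.prodMap
      isCompact_UU.isClosed.isClosedEmbedding_subtypeVal).measurableEmbedding
  obtain ⟨σ, hσ, hext⟩ := hemb.exists_measurable_extend hτ fun _ => inferInstance
  refine ⟨σ, hσ, fun x hx y hy => ?_⟩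
  have heq : σ (x, y) = τ (⟨x, hx⟩, ⟨y, hy⟩) := congrFun hext (⟨x, hx⟩, ⟨y, hy⟩)
  simpa only [heq, iInf_DU_sq] using hle (⟨x, hx⟩, ⟨y, hy⟩)

end Selection

section Haar

lemma isHaarLike_range_map_haarMeasure {G X : Type*} [Group G] [TopologicalSpace G]
    [IsTopologicalGroup G] [CompactSpace G] [MeasurableSpace G] [BorelSpace G] [Monoid X]
    [MeasurableSpace X] [MeasurableMul X] (φ : G →* X) (hφ : Measurable φ)
    (hrange : MeasurableSet (Set.range φ)) :
    IsHaarLike (Set.range φ)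
      ((Measure.haarMeasure (⊤ : TopologicalSpace.PositiveCompacts G)).map φ) := by
  set H := Measure.haarMeasure (⊤ : TopologicalSpace.PositiveCompacts G)
  have : IsProbabilityMeasure H := ⟨Measure.haarMeasure_self⟩
  have hright (g : G) : H.map (· * g) = H :=
    have := Measure.isProbabilityMeasure_map (μ := H) (measurable_mul_const g).aemeasurable
    Measure.isHaarMeasure_eq_of_isProbabilityMeasure _ _
  refine ⟨Measure.isProbabilityMeasure_map hφ.aemeasurable, ?_, ?_⟩
  · rw [Measure.map_apply hφ hrange.compl, Set.preimage_compl, Set.preimage_range, Set.compl_univ,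
      measure_empty]
  · rintro _ ⟨g, rfl⟩
    have hleft_comm : (φ g * ·) ∘ φ = φ ∘ (g * ·) := by ext; simp
    have hright_comm : (· * φ g) ∘ φ = φ ∘ (· * g) := by ext; simp
    constructor
    · rw [Measure.map_map (measurable_const_mul _) hφ, hleft_comm,
        ← Measure.map_map hφ (measurable_const_mul g), map_mul_left_eq_self]
    · rw [Measure.map_map (measurable_mul_const _) hφ, hright_comm,
        ← Measure.map_map hφ (measurable_mul_const g), hright]

lemma isHaarLike_haarLike {X : Type*} [MeasurableSpace X] [Mul X] {S : Set X}
    (h : ∃ μ, IsHaarLike S μ) : IsHaarLike S (haarLike S) := by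
  rw [haarLike, dif_pos h]
  exact h.choose_spec

lemma isHaarLike_haarLike_UU (n : ℕ) : IsHaarLike (UU n) (haarLike (UU n)) := by
  have hcoe : (unitaryGroup (Fin n) ℂ : Set (Matrix (Fin n) (Fin n) ℂ)) = UU n :=
    Set.ext fun _ => UU.mem_iff_mem_unitaryGroup.symm
  have : CompactSpace (unitaryGroup (Fin n) ℂ) :=
    isCompact_iff_compactSpace.1 (hcoe ▸ isCompact_UU)
  have hrange : Set.range (unitaryGroup (Fin n) ℂ).subtype = UU n := by
    rw [← hcoe, Submonoid.coe_subtype, Subtype.range_coe]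
  refine isHaarLike_haarLike ⟨_, hrange ▸ isHaarLike_range_map_haarMeasure _ measurable_subtype_coe
    (hrange ▸ isCompact_UU.isClosed.measurableSet)⟩

end Haar

section Coupling

variable {X Y : Type*} [MeasurableSpace X] [MeasurableSpace Y]

namespace IsCoupling

lemma smul {η : Measure (X × X)} {μ ν : Measure X} (h : IsCoupling η μ ν) (c : ℝ≥0∞) :
    IsCoupling (c • η) (c • μ) (c • ν) :=
  ⟨by rw [Measure.map_smul, h.1], by rw [Measure.map_smul, h.2]⟩

lemma finset_sum {ι : Type*} {s : Finset ι} {η : ι → Measure (X × X)} {μ ν : ι → Measure X}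
    (h : ∀ i ∈ s, IsCoupling (η i) (μ i) (ν i)) :
    IsCoupling (∑ i ∈ s, η i) (∑ i ∈ s, μ i) (∑ i ∈ s, ν i) := by
  constructor
  · rw [Measure.map_finset_sum measurable_fst.aemeasurable]
    exact Finset.sum_congr rfl fun i hi => (h i hi).1
  · rw [Measure.map_finset_sum measurable_snd.aemeasurable]
    exact Finset.sum_congr rfl fun i hi => (h i hi).2

lemma isProbabilityMeasure {η : Measure (X × X)} {μ ν : Measure X} [IsProbabilityMeasure μ]
    (h : IsCoupling η μ ν) : IsProbabilityMeasure η :=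
  have : IsProbabilityMeasure (η.map Prod.fst) := h.1.symm ▸ inferInstance
  Measure.isProbabilityMeasure_of_map Prod.fst

lemma ae_mem {η : Measure (X × X)} {μ ν : Measure X} (h : IsCoupling η μ ν) {S T : Set X}
    (hμ : μ Sᶜ = 0) (hν : ν Tᶜ = 0) : ∀ᵐ z ∂η, z.1 ∈ S ∧ z.2 ∈ T := by
  have hfst : ∀ᵐ z ∂η, z.1 ∈ S :=
    ae_of_ae_map (p := (· ∈ S)) measurable_fst.aemeasurable (by rw [h.1]; exact hμ)
  have hsnd : ∀ᵐ z ∂η, z.2 ∈ T :=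
    ae_of_ae_map (p := (· ∈ T)) measurable_snd.aemeasurable (by rw [h.2]; exact hν)
  exact hfst.and hsnd

lemma map_prod_skew {G : Type*} [MeasurableSpace G] {H : Measure G} [SFinite H]
    {η : Measure (X × X)} {μ ν : Measure X} [SFinite η] [SFinite μ] [SFinite ν]
    (h : IsCoupling η μ ν) {f : X × G → Y} (hf : Measurable f) {τ : X × X → G → G}
    (hτ : Measurable (Function.uncurry τ)) (hH : ∀ z, H.map (τ z) = H) :
    IsCoupling ((η.prod H).map fun w => (f (w.1.1, w.2), f (w.1.2, τ w.1 w.2)))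
      ((μ.prod H).map f) ((ν.prod H).map f) := by
  have hfst : MeasurePreserving (fun w : (X × X) × G => (w.1.1, w.2)) (η.prod H) (μ.prod H) :=
    MeasurePreserving.skew_product (g := fun _ u => u) ⟨measurable_fst, h.1⟩ measurable_snd
      (ae_of_all _ fun _ => Measure.map_id')
  have hsnd : MeasurePreserving (fun w : (X × X) × G => (w.1.2, τ w.1 w.2))
      (η.prod H) (ν.prod H) :=
    MeasurePreserving.skew_product ⟨measurable_snd, h.2⟩ hτ (ae_of_all _ hH)
  have hpair := (hf.comp hfst.measurable).prodMk (hf.comp hsnd.measurable)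
  constructor
  · rw [← hfst.map_eq, Measure.map_map hf hfst.measurable]
    exact Measure.map_map measurable_fst hpair
  · rw [← hsnd.map_eq, Measure.map_map hf hsnd.measurable]
    exact Measure.map_map measurable_snd hpair

end IsCoupling

lemma wassersteinE_rpow (d : X → X → ℝ≥0∞) {p : ℝ} (hp : 0 < p) (μ ν : Measure X) :
    wassersteinE d p μ ν ^ p =
      ⨅ (η : Measure (X × X)) (_ : IsCoupling η μ ν), ∫⁻ z, d z.1 z.2 ^ p ∂η := by
  refine ((ENNReal.orderIsoRpow p hp).map_iInf₂ _).trans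
    (iInf_congr fun η => iInf_congr fun _ => ?_)
  rw [ENNReal.orderIsoRpow_apply, ← ENNReal.rpow_mul, one_div_mul_cancel hp.ne', ENNReal.rpow_one]

lemma wassersteinE_le_rpow_mul_of_forall_isCoupling {d : X → X → ℝ≥0∞} {d' : Y → Y → ℝ≥0∞}
    {p : ℝ} (hp : 0 < p) {c : ℝ≥0∞} (hc : c ≠ ∞) {μ ν : Measure X} {μ' ν' : Measure Y}
    (hcoupling : ∃ η, IsCoupling η μ ν)
    (h : ∀ η, IsCoupling η μ ν → ∀ ε ≠ 0, ∃ η', IsCoupling η' μ' ν' ∧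
      ∫⁻ z, d' z.1 z.2 ^ p ∂η' ≤ c * ∫⁻ z, d z.1 z.2 ^ p ∂η + ε) :
    wassersteinE d' p μ' ν' ≤ c ^ (1 / p) * wassersteinE d p μ ν := by
  have : Nonempty {η // IsCoupling η μ ν} := nonempty_subtype.2 hcoupling
  rw [← ENNReal.rpow_le_rpow_iff hp, ENNReal.mul_rpow_of_nonneg _ _ hp.le, ← ENNReal.rpow_mul,
    one_div_mul_cancel hp.ne', ENNReal.rpow_one, wassersteinE_rpow d hp, iInf_subtype',
    ENNReal.mul_iInf (fun h => absurd h hc), wassersteinE_rpow d' hp]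
  refine le_iInf fun ⟨η, hη⟩ => ENNReal.le_of_forall_pos_le_add fun ε hε _ => ?_
  obtain ⟨η', hη', hle⟩ := h η hη ε (by exact_mod_cast hε.ne')
  exact (iInf₂_le η' hη').trans hle

lemma sum_lintegral_le_lintegral_sum {ι : Type*} (μ : Measure X) (s : Finset ι)
    (f : ι → X → ℝ≥0∞) : ∑ i ∈ s, ∫⁻ x, f i x ∂μ ≤ ∫⁻ x, ∑ i ∈ s, f i x ∂μ := by
  classical
  induction s using Finset.induction_on with
  | empty => simp
  | insert i s hi ih =>
    simp only [Finset.sum_insert hi]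
    exact (add_le_add_right ih _).trans (le_lintegral_add _ _)

end Coupling

section Contraction

variable {n : ℕ}

lemma measurable_embed2_mul {i j : Fin n} (hij : i ≠ j) :
    Measurable fun w : Matrix (Fin n) (Fin n) ℂ × Matrix (Fin 2) (Fin 2) ℂ =>
      embed2 i j w.2 * w.1 :=
  (((continuous_embed2 hij).comp continuous_snd).matrix_mul continuous_fst).measurable

lemma unitKernel_apply (x : Matrix (Fin n) (Fin n) ℂ) {s : Set (Matrix (Fin n) (Fin n) ℂ)}
    (hs : MeasurableSet s) :
    unitKernel n x s = (n.choose 2 : ℝ≥0∞)⁻¹ * ∑ p ∈ pairs n,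
      haarLike (UU 2) (Prod.mk x ⁻¹' ((fun w => embed2 p.1 p.2 w.2 * w.1) ⁻¹' s)) := by
  rw [unitKernel, Measure.smul_apply, Measure.finsetSum_apply, smul_eq_mul]
  congr 1
  refine Finset.sum_congr rfl fun p hp => ?_
  have hmeas := (measurable_embed2_mul (ne_of_mem_pairs hp)).comp (measurable_prodMk_left (x := x))
  exact Measure.map_apply hmeas hs

lemma measurable_unitKernel : Measurable (unitKernel n) := by
  have := (isHaarLike_haarLike_UU 2).1
  refine Measure.measurable_of_measurable_coe _ fun s hs => ?_
  simp only [unitKernel_apply _ hs]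
  exact (Finset.measurable_fun_sum _ fun p hp => measurable_measure_prodMk_left
    (measurable_embed2_mul (ne_of_mem_pairs hp) hs)).const_mul _

lemma bind_unitKernel (μ : Measure (Matrix (Fin n) (Fin n) ℂ)) [SFinite μ] :
    μ.bind (unitKernel n) = (n.choose 2 : ℝ≥0∞)⁻¹ • ∑ p ∈ pairs n,
      (μ.prod (haarLike (UU 2))).map fun w => embed2 p.1 p.2 w.2 * w.1 := by
  have := (isHaarLike_haarLike_UU 2).1
  ext s hs
  have hpre : ∀ p ∈ pairs n, MeasurableSet ((fun w : Matrix (Fin n) (Fin n) ℂ ×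
      Matrix (Fin 2) (Fin 2) ℂ => embed2 p.1 p.2 w.2 * w.1) ⁻¹' s) := fun p hp =>
    measurable_embed2_mul (ne_of_mem_pairs hp) hs
  rw [Measure.bind_apply hs measurable_unitKernel.aemeasurable, Measure.smul_apply,
    Measure.finsetSum_apply, smul_eq_mul]
  simp only [unitKernel_apply _ hs]
  rw [lintegral_const_mul _ (Finset.measurable_fun_sum _ fun p hp =>
      measurable_measure_prodMk_left (hpre p hp)),
    lintegral_finsetSum _ fun p hp => measurable_measure_prodMk_left (hpre p hp)]
  congr 1
  refine Finset.sum_congr rfl fun p hp => ?_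
  rw [Measure.map_apply (measurable_embed2_mul (ne_of_mem_pairs hp)) hs,
    Measure.prod_apply (hpre p hp)]

/-- One joint step of two walks with joint law `η`: both use the same plane `p` and the same Haar
rotation `u`, after the second walk has been moved by the correction `σ p`. -/
def jointStep (σ : Fin n × Fin n → Matrix (Fin n) (Fin n) ℂ × Matrix (Fin n) (Fin n) ℂ → UU 2)
    (η : Measure (Matrix (Fin n) (Fin n) ℂ × Matrix (Fin n) (Fin n) ℂ)) :
    Measure (Matrix (Fin n) (Fin n) ℂ × Matrix (Fin n) (Fin n) ℂ) :=
  (n.choose 2 : ℝ≥0∞)⁻¹ • ∑ p ∈ pairs n, (η.prod (haarLike (UU 2))).map fun w =>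
    (embed2 p.1 p.2 w.2 * w.1.1, embed2 p.1 p.2 (w.2 * σ p w.1) * w.1.2)

variable {σ : Fin n × Fin n → Matrix (Fin n) (Fin n) ℂ × Matrix (Fin n) (Fin n) ℂ → UU 2}
  {η : Measure (Matrix (Fin n) (Fin n) ℂ × Matrix (Fin n) (Fin n) ℂ)}
  {μ ν : Measure (Matrix (Fin n) (Fin n) ℂ)}

lemma isCoupling_jointStep [SFinite η] [SFinite μ] [SFinite ν]
    (hσ : ∀ p ∈ pairs n, Measurable (σ p)) (hη : IsCoupling η μ ν) :
    IsCoupling (jointStep σ η) (μ.bind (unitKernel n)) (ν.bind (unitKernel n)) := by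
  have := (isHaarLike_haarLike_UU 2).1
  rw [bind_unitKernel, bind_unitKernel, jointStep]
  refine (IsCoupling.finset_sum fun p hp => ?_).smul _
  have hrotate : Measurable (Function.uncurry
      fun (z : Matrix (Fin n) (Fin n) ℂ × Matrix (Fin n) (Fin n) ℂ)
        (u : Matrix (Fin 2) (Fin 2) ℂ) => u * (σ p z : Matrix (Fin 2) (Fin 2) ℂ)) :=
    measurable_snd.mul ((measurable_subtype_coe.comp (hσ p hp)).comp measurable_fst)
  have hinv (z : Matrix (Fin n) (Fin n) ℂ × Matrix (Fin n) (Fin n) ℂ) :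
      (haarLike (UU 2)).map (· * (σ p z : Matrix (Fin 2) (Fin 2) ℂ)) = haarLike (UU 2) :=
    ((isHaarLike_haarLike_UU 2).2.2 _ (σ p z).2).2
  have hskew := hη.map_prod_skew (measurable_embed2_mul (ne_of_mem_pairs hp)) hrotate hinv
  exact hskew

lemma lintegral_jointStep_le (r : ℝ) (hr : 0 ≤ r) :
    ∫⁻ z, DU n z.1 z.2 ^ r ∂jointStep σ η ≤ (n.choose 2 : ℝ≥0∞)⁻¹ *
      ∫⁻ z, ∑ p ∈ pairs n, DU n z.1 (embed2 p.1 p.2 (σ p z) * z.2) ^ r ∂η := by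
  have hH := isHaarLike_haarLike_UU 2
  have := hH.1
  have hmem : ∀ᵐ u ∂haarLike (UU 2), u ∈ UU 2 := hH.2.1
  rw [jointStep, lintegral_smul_measure, lintegral_finsetSum_measure, smul_eq_mul]
  gcongr
  refine (Finset.sum_le_sum fun p hp => ?_).trans (sum_lintegral_le_lintegral_sum _ _ _)
  refine (lintegral_map_le _ _).trans ((lintegral_prod_le _).trans (lintegral_mono fun z => ?_))
  have hij := ne_of_mem_pairs hp
  calc ∫⁻ u, DU n (embed2 p.1 p.2 u * z.1) (embed2 p.1 p.2 (u * σ p z) * z.2) ^ r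
          ∂haarLike (UU 2)
      ≤ ∫⁻ _, DU n z.1 (embed2 p.1 p.2 (σ p z) * z.2) ^ r ∂haarLike (UU 2) := by
        refine lintegral_mono_ae (hmem.mono fun u hu => ?_)
        rw [embed2_mul hij, Matrix.mul_assoc]
        gcongr
        exact DU_mul_left_le (embed2_mem_UU hij hu) _ _
    _ = DU n z.1 (embed2 p.1 p.2 (σ p z) * z.2) ^ r := by simp

lemma exists_isCoupling_bind_unitKernel (hn : 2 ≤ n) [IsProbabilityMeasure μ]
    [IsProbabilityMeasure ν] (hμ : μ (UU n)ᶜ = 0) (hν : ν (UU n)ᶜ = 0) (hη : IsCoupling η μ ν)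
    {ε : ℝ≥0∞} (hε : ε ≠ 0) :
    ∃ η', IsCoupling η' (μ.bind (unitKernel n)) (ν.bind (unitKernel n)) ∧
      ∫⁻ z, DU n z.1 z.2 ^ (2 : ℝ) ∂η' ≤
        (n.choose 2 : ℝ≥0∞)⁻¹ * ((n.choose 2 - 1 : ℕ) : ℝ≥0∞) *
          ∫⁻ z, DU n z.1 z.2 ^ (2 : ℝ) ∂η + ε := by
  have := hη.isProbabilityMeasure
  have : Nonempty (UU 2) := ⟨1, UU.one_mem⟩
  choose! σ hσ hle using fun p (hp : p ∈ pairs n) =>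
    exists_measurable_DU_sq_le_planeDist_sq_add (ne_of_mem_pairs hp) hε
  have hchoose : (n.choose 2 : ℝ≥0∞) ≠ 0 := by exact_mod_cast (Nat.choose_pos hn).ne'
  have hsum : ∀ᵐ z ∂η, ∑ p ∈ pairs n, DU n z.1 (embed2 p.1 p.2 (σ p z) * z.2) ^ (2 : ℝ) ≤
      ((n.choose 2 - 1 : ℕ) : ℝ≥0∞) * DU n z.1 z.2 ^ (2 : ℝ) + n.choose 2 * ε := by
    filter_upwards [hη.ae_mem hμ hν] with z ⟨hx, hy⟩
    calc _ ≤ ∑ p ∈ pairs n, (planeDist p.1 p.2 z.1 z.2 ^ (2 : ℝ) + ε) :=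
          Finset.sum_le_sum fun p hp => hle p hp _ hx _ hy
      _ = ∑ p ∈ pairs n, planeDist p.1 p.2 z.1 z.2 ^ (2 : ℝ) + n.choose 2 * ε := by
          rw [Finset.sum_add_distrib, Finset.sum_const, card_pairs, nsmul_eq_mul]
      _ ≤ _ := by
          gcongr
          exact sum_planeDist_sq_le hn hx hy
  refine ⟨jointStep σ η, isCoupling_jointStep hσ hη, ?_⟩
  calc ∫⁻ z, DU n z.1 z.2 ^ (2 : ℝ) ∂jointStep σ η
      ≤ (n.choose 2 : ℝ≥0∞)⁻¹ * ∫⁻ z, ∑ p ∈ pairs n,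
          DU n z.1 (embed2 p.1 p.2 (σ p z) * z.2) ^ (2 : ℝ) ∂η :=
        lintegral_jointStep_le 2 two_pos.le
    _ ≤ (n.choose 2 : ℝ≥0∞)⁻¹ * ∫⁻ z,
          ((n.choose 2 - 1 : ℕ) : ℝ≥0∞) * DU n z.1 z.2 ^ (2 : ℝ) + n.choose 2 * ε ∂η := by
        exact mul_le_mul_right (lintegral_mono_ae hsum) _
    _ = _ := by
        rw [lintegral_add_right _ measurable_const,
          lintegral_const_mul' _ _ (ENNReal.natCast_ne_top _), lintegral_const, measure_univ,
          mul_one, mul_add, ← mul_assoc, ← mul_assoc,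
          ENNReal.inv_mul_cancel hchoose (ENNReal.natCast_ne_top _), one_mul]

lemma rpow_contraction_constant {N : ℕ} (hN : 0 < N) :
    ((N : ℝ≥0∞)⁻¹ * ((N - 1 : ℕ) : ℝ≥0∞)) ^ (1 / (2 : ℝ)) =
      ENNReal.ofReal (Real.sqrt (1 - 1 / (N : ℝ))) := by
  have hN' : (0 : ℝ) < N := by exact_mod_cast hN
  have hratio : (1 - 1 / (N : ℝ)) = (N : ℝ)⁻¹ * ((N - 1 : ℕ) : ℝ) := by
    rw [Nat.cast_sub hN, Nat.cast_one]
    field_simp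
  rw [hratio, Real.sqrt_eq_rpow, ← ENNReal.ofReal_rpow_of_nonneg (by positivity) (by norm_num),
    ENNReal.ofReal_mul (by positivity), ENNReal.ofReal_inv_of_pos hN', ENNReal.ofReal_natCast,
    ENNReal.ofReal_natCast]

end Contraction

/-- For every `n ≥ 2`, the random walk kernel `L` on `U(n)` is
`√(1 - 1/C(n,2))`-contracting in the `L²` Wasserstein metric for the intrinsic metric `D`:
for all probability measures `μ, ν` on `U(n)`,
`W_{D,2}(μL, νL) ≤ √(1 - 1/C(n,2)) · W_{D,2}(μ, ν)`. -/
theorem unitary_walk_kernel_contracting (n : ℕ) (hn : 2 ≤ n)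
    (μ ν : Measure (Matrix (Fin n) (Fin n) ℂ))
    (hμprob : IsProbabilityMeasure μ) (hνprob : IsProbabilityMeasure ν)
    (hμU : μ (UU n)ᶜ = 0) (hνU : ν (UU n)ᶜ = 0) :
    wassersteinE (DU n) 2 (μ.bind (unitKernel n)) (ν.bind (unitKernel n)) ≤
      ENNReal.ofReal (Real.sqrt (1 - 1 / (n.choose 2 : ℝ))) *
        wassersteinE (DU n) 2 μ ν := by
  have hpos : 0 < n.choose 2 := Nat.choose_pos hn
  have hfinite : (n.choose 2 : ℝ≥0∞)⁻¹ * ((n.choose 2 - 1 : ℕ) : ℝ≥0∞) ≠ ∞ :=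
    ENNReal.mul_ne_top (ENNReal.inv_ne_top.2 (by exact_mod_cast hpos.ne'))
      (ENNReal.natCast_ne_top _)
  rw [← rpow_contraction_constant hpos]
  refine wassersteinE_le_rpow_mul_of_forall_isCoupling two_pos hfinite
    ⟨μ.prod ν, by simp, by simp⟩ fun η hη ε hε => ?_
  exact exists_isCoupling_bind_unitKernel hn hμU hνU hη hε

end
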